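/- Let S ⊆ ℝ^d be a measurable set and μ a probability measure on ℝ^d with μ(S) = 1. Let {S_i}_{i ∈ I} be a finite family of measurable subsets of S with μ(S_i ∩ S_j) = 0 for i ≠ j, μ(⋃_{i ∈ I} S_i) = 1, and diam(S_i) ≤ ρ for every i, where ρ > 0 and diam denotes the Euclidean diameter. Let J : ℝ^d → ℝ^d be Lipschitz with constant L with respect to the Euclidean norm. Suppose for each i ∈ I there are m_i unit vectors n_{i,1}, …, n_{i,m_i} ∈ ℝ^d with associated m_i × d matrix N_i (rows n_{i,k}ᵀ), constants 0 < c_i ≤ C_i with c_i‖w‖₂ ≤ ‖N_i w‖₂ ≤ C_i‖w‖₂ for all w ∈ ℝ^d, and finite measures σ_{i,k} with 0 < σ_{i,k}(ℝ^d) < ∞ and σ_{i,k}(ℝ^d \ S_i) = 0. Define α̂_{i,k} := (1/σ_{i,k}(ℝ^d)) ∫ ⟨n_{i,k}, J(y)⟩ σ_{i,k}(dy), J̃_i := (N_iᵀN_i)⁻¹ N_iᵀ α̂_i ∈ ℝ^d, and let J̃ : S → ℝ^d be defined by J̃(x) := J̃_i whenever x lies in exactly one cell S_i (arbitrary on the μ-null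 remainder). Then ‖J̃ − J‖_{L²(μ; ℝ^d)} ≤ (sup_{i ∈ I} (C_i/c_i²)√(m_i)) · L · ρ. -/

import Mathlib

open MeasureTheory Matrix

/-!
Fix a cell with normal map `N`, flux vector `α` and reconstructed current `u`, and let `v = J x`
for a point `x` of the cell. Every facet measure lives on the cell, so each entry of the residual
`α - N v` is an average of quantities of size at most `L ρ`, and the residual has norm at most
`√m L ρ`. Since the least-squares residual `α - N u` is orthogonal to the range of `N`, the vector
`N (u - v)` is the orthogonal projection of `α - N v` to that range. Hence
`c ‖u - v‖ ≤ ‖N (u - v)‖ ≤ √m L ρ`, and `1 / c ≤ C / c ^ 2` gives the stated constant.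
-/

open scoped ENNReal NNReal Function

section LeastSquares

variable {𝕜 E F : Type*} [RCLike 𝕜] [NormedAddCommGroup E] [InnerProductSpace 𝕜 E]
  [NormedAddCommGroup F] [InnerProductSpace 𝕜 F]

/-- `u` is a least-squares solution of `A u = b`. The normal equations are encoded as orthogonality
of the residual to the range of `A`, which avoids the adjoint of `A`. -/
def IsLeastSquaresSolution (A : E →ₗ[𝕜] F) (b : F) (u : E) : Prop :=
  b - A u ∈ (LinearMap.range A)ᗮ

theorem IsLeastSquaresSolution.norm_map_sub_le {A : E →ₗ[𝕜] F} {b : F} {u : E}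
    (hu : IsLeastSquaresSolution A b u) (v : E) : ‖A (u - v)‖ ≤ ‖b - A v‖ := by
  have horth : inner 𝕜 (A (u - v)) (b - A u) = 0 := hu _ (LinearMap.mem_range_self A _)
  have hpyth := norm_add_sq_eq_norm_sq_add_norm_sq_of_inner_eq_zero _ _ horth
  have hsum : A (u - v) + (b - A u) = b - A v := by rw [map_sub]; abel
  rw [hsum] at hpyth
  exact (sq_le_sq₀ (norm_nonneg _) (norm_nonneg _)).mp (by nlinarith [mul_self_nonneg ‖b - A u‖])

theorem mulVec_injective_of_le_norm_toEuclideanLin {m n : Type*} [Fintype m] [Fintype n]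
    [DecidableEq n] {A : Matrix m n 𝕜} {c : ℝ} (hc : 0 < c)
    (hA : ∀ w, c * ‖w‖ ≤ ‖toEuclideanLin A w‖) : Function.Injective A.mulVec := by
  refine (injective_iff_map_eq_zero A.mulVecLin).mpr fun w hw => ?_
  have hle : c * ‖WithLp.toLp 2 w‖ ≤ 0 := by
    simpa [toLpLin_toLp, show A *ᵥ w = 0 from hw] using hA (WithLp.toLp 2 w)
  exact (WithLp.toLp_eq_zero 2).mp (norm_le_zero_iff.mp (nonpos_of_mul_nonpos_right hle hc))

open scoped ComplexOrder in
theorem isLeastSquaresSolution_toEuclideanLin {m n : Type*} [Fintype m] [Fintype n]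
    [DecidableEq n] {A : Matrix m n 𝕜} (hA : Function.Injective A.mulVec) (b : m → 𝕜) :
    IsLeastSquaresSolution (toEuclideanLin A) (WithLp.toLp 2 b)
      (WithLp.toLp 2 (((Aᴴ * A)⁻¹ * Aᴴ) *ᵥ b)) := by
  classical
  have hdet : IsUnit (Aᴴ * A).det :=
    (isUnit_iff_isUnit_det _).mp (PosDef.conjTranspose_mul_self A hA).isUnit
  have hnormal : Aᴴ *ᵥ (A *ᵥ (((Aᴴ * A)⁻¹ * Aᴴ) *ᵥ b)) = Aᴴ *ᵥ b := by
    rw [mulVec_mulVec, mulVec_mulVec, ← Matrix.mul_assoc, mul_nonsing_inv _ hdet, Matrix.one_mul]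
  rw [IsLeastSquaresSolution, LinearMap.orthogonal_range, LinearMap.mem_ker,
    ← toEuclideanLin_conjTranspose_eq_adjoint]
  simp only [map_sub, toLpLin_toLp, toLin'_apply, hnormal, sub_self]

end LeastSquares

theorem norm_le_sqrt_card_mul {𝕜 κ : Type*} [RCLike 𝕜] [Fintype κ] {x : EuclideanSpace 𝕜 κ}
    {r : ℝ} (hr : 0 ≤ r) (hx : ∀ k, ‖x k‖ ≤ r) : ‖x‖ ≤ √(Fintype.card κ) * r := by
  rw [EuclideanSpace.norm_eq, ← Real.sqrt_sq hr, ← Real.sqrt_mul (Nat.cast_nonneg _)]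
  refine Real.sqrt_le_sqrt ?_
  calc ∑ k, ‖x k‖ ^ 2 ≤ ∑ _k : κ, r ^ 2 := by gcongr with k; exact hx k
    _ = Fintype.card κ * r ^ 2 := by simp

theorem dist_average_le_of_lipschitzOnWith {X F : Type*} [PseudoMetricSpace X] [MeasurableSpace X]
    [OpensMeasurableSpace X] [NormedAddCommGroup F] [NormedSpace ℝ F] [FiniteDimensional ℝ F]
    {f : X → F} {s : Set X} {K ρ : ℝ≥0} (hf : LipschitzOnWith K f s) (hs : Metric.ediam s ≤ ρ)
    {σ : Measure X} [IsFiniteMeasure σ] [NeZero σ] (hσ : ∀ᵐ y ∂σ, y ∈ s) {x : X} (hx : x ∈ s) :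
    dist (⨍ y, f y ∂σ) (f x) ≤ K * ρ := by
  have hball : ∀ᵐ y ∂σ, f y ∈ Metric.closedBall (f x) (K * ρ) := by
    filter_upwards [hσ] with y hy
    have hyx : dist y x ≤ ρ := by
      exact_mod_cast (edist_nndist y x) ▸ Metric.edist_le_of_ediam_le hy hx hs
    exact (hf.dist_le_mul y hy x hx).trans (by gcongr)
  have hmeas : AEStronglyMeasurable f σ := by
    -- A Lipschitz extension of `f` makes up for the missing measurability of `s`.
    obtain ⟨g, hg, hfg⟩ := hf.extend_finite_dimension
    exact ⟨g, hg.continuous.stronglyMeasurable, hσ.mono hfg⟩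
  have hint : Integrable f σ := .of_bound hmeas (‖f x‖ + K * ρ) <| hball.mono fun y hy =>
    norm_le_of_mem_closedBall hy
  exact (convex_closedBall _ _).average_mem Metric.isClosed_closedBall hball hint

/-- The map `N : w ↦ (⟪n k, w⟫)ₖ` given by the matrix with rows `n k`, written without
coordinates on the domain. -/
noncomputable def normalMap {κ E : Type*} [NormedAddCommGroup E] [InnerProductSpace ℝ E]
    (n : κ → E) : E →ₗ[ℝ] EuclideanSpace ℝ κ :=
  (WithLp.linearEquiv 2 ℝ (κ → ℝ)).symm.toLinearMap ∘ₗ LinearMap.pi fun k => innerₗ E (n k)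

/-- The vector `α̂` of facet averages of the normal components of the current `J`, where `σ k` is
the (unnormalized) measure on the facet with normal `n k`. -/
noncomputable def facetFlux {κ X E : Type*} [MeasurableSpace X] [NormedAddCommGroup E]
    [InnerProductSpace ℝ E] (n : κ → E) (J : X → E) (σ : κ → Measure X) : EuclideanSpace ℝ κ :=
  WithLp.toLp 2 fun k => ⨍ y, inner ℝ (n k) (J y) ∂σ k

theorem toEuclideanLin_eq_normalMap {κ d : Type*} [Fintype d] [DecidableEq d]
    {N : Matrix κ d ℝ} {n : κ → EuclideanSpace ℝ d} (hN : ∀ k j, N k j = n k j) :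
    toEuclideanLin N = normalMap n := by
  ext w k
  simp [normalMap, PiLp.inner_apply, mulVec, dotProduct, hN, mul_comm]

theorem facetFlux_eq_toLp {κ X E : Type*} [MeasurableSpace X] [NormedAddCommGroup E]
    [InnerProductSpace ℝ E] {n : κ → E} {J : X → E} {σ : κ → Measure X} {α : κ → ℝ}
    (hα : ∀ k, α k = (σ k Set.univ).toReal⁻¹ * ∫ y, inner ℝ (n k) (J y) ∂σ k) :
    facetFlux n J σ = WithLp.toLp 2 α := by
  ext k
  simp [facetFlux, hα, average_eq, Measure.real]

section Reconstruction

variable {X E κ : Type*} [PseudoMetricSpace X] [MeasurableSpace X] [OpensMeasurableSpace X]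
  [NormedAddCommGroup E] [InnerProductSpace ℝ E] [Fintype κ] {n : κ → E} {J : X → E}
  {σ : κ → Measure X} [∀ k, IsFiniteMeasure (σ k)] [∀ k, NeZero (σ k)] {s : Set X} {L ρ : ℝ≥0}

theorem norm_facetFlux_sub_normalMap_le (hn : ∀ k, ‖n k‖ ≤ 1) (hJ : LipschitzOnWith L J s)
    (hs : Metric.ediam s ≤ ρ) (hσ : ∀ k, ∀ᵐ y ∂σ k, y ∈ s) {x : X} (hx : x ∈ s) :
    ‖facetFlux n J σ - normalMap n (J x)‖ ≤ √(Fintype.card κ) * (L * ρ) := by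
  refine norm_le_sqrt_card_mul (by positivity) fun k => ?_
  have hcomp : LipschitzOnWith L (fun y => inner ℝ (n k) (J y)) s := by
    have hlip : LipschitzWith 1 (innerSL ℝ (n k)) := by
      exact (innerSL ℝ (n k)).lipschitz.weaken (by simpa [← NNReal.coe_le_coe] using hn k)
    simpa [Function.comp_def] using hlip.comp_lipschitzOnWith hJ
  exact dist_average_le_of_lipschitzOnWith hcomp hs (hσ k) hx

theorem norm_leastSquares_sub_le {c : ℝ} (hc : 0 < c) (hlow : ∀ w, c * ‖w‖ ≤ ‖normalMap n w‖)
    (hn : ∀ k, ‖n k‖ ≤ 1) (hJ : LipschitzOnWith L J s) (hs : Metric.ediam s ≤ ρ)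
    (hσ : ∀ k, ∀ᵐ y ∂σ k, y ∈ s) {u : E}
    (hu : IsLeastSquaresSolution (normalMap n) (facetFlux n J σ) u) {x : X} (hx : x ∈ s) :
    ‖u - J x‖ ≤ √(Fintype.card κ) / c * L * ρ := by
  have hchain : c * ‖u - J x‖ ≤ √(Fintype.card κ) * (L * ρ) :=
    calc c * ‖u - J x‖ ≤ ‖normalMap n (u - J x)‖ := hlow _
      _ ≤ ‖facetFlux n J σ - normalMap n (J x)‖ := hu.norm_map_sub_le _
      _ ≤ √(Fintype.card κ) * (L * ρ) := norm_facetFlux_sub_normalMap_le hn hJ hs hσ hx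
  rw [mul_assoc, div_mul_eq_mul_div, le_div_iff₀ hc]
  linarith

end Reconstruction

theorem ae_existsUnique_mem {X ι : Type*} [MeasurableSpace X] {μ : Measure X} [Countable ι]
    {s : ι → Set X} (hdisj : Pairwise (AEDisjoint μ on s)) (hcover : ∀ᵐ x ∂μ, ∃ i, x ∈ s i) :
    ∀ᵐ x ∂μ, ∃! i, x ∈ s i := by
  have hnotMem : ∀ᵐ x ∂μ, ∀ i j, i ≠ j → x ∉ s i ∩ s j := by
    simp only [ae_all_iff]
    exact fun i j hij => measure_eq_zero_iff_ae_notMem.mp (hdisj hij)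
  filter_upwards [hcover, hnotMem] with x ⟨i, hi⟩ hx
  exact ⟨i, hi, fun j hj => of_not_not fun hji => hx j i hji ⟨hj, hi⟩⟩

theorem approximate_current_L2_error_bound_general {X E ι : Type*} [PseudoMetricSpace X]
    [MeasurableSpace X] [OpensMeasurableSpace X] [NormedAddCommGroup E] [InnerProductSpace ℝ E]
    [Countable ι] {κ : ι → Type*} [∀ i, Fintype (κ i)] {μ : Measure X} (p : ℝ≥0∞)
    {cell : ι → Set X} (hdisj : Pairwise (AEDisjoint μ on cell))
    (hcover : ∀ᵐ x ∂μ, ∃ i, x ∈ cell i) {ρ : ℝ≥0} (hdiam : ∀ i, Metric.ediam (cell i) ≤ ρ)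
    {J : X → E} {L : ℝ≥0} (hJ : ∀ i, LipschitzOnWith L J (cell i))
    {n : ∀ i, κ i → E} (hn : ∀ i k, ‖n i k‖ = 1)
    {c : ι → ℝ} (hc : ∀ i, 0 < c i) (hlow : ∀ i w, c i * ‖w‖ ≤ ‖normalMap (n i) w‖)
    {σ : ∀ i, κ i → Measure X} [∀ i k, IsFiniteMeasure (σ i k)] [∀ i k, NeZero (σ i k)]
    (hσ : ∀ i k, ∀ᵐ y ∂σ i k, y ∈ cell i) {u : ι → E}
    (hu : ∀ i, IsLeastSquaresSolution (normalMap (n i)) (facetFlux (n i) J (σ i)) (u i))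
    {Jtilde : X → E}
    (hJtilde : ∀ x i, x ∈ cell i → (∀ j, j ≠ i → x ∉ cell j) → Jtilde x = u i) :
    eLpNorm (fun x => Jtilde x - J x) p μ ≤
      (⨆ i, ENNReal.ofReal (√(Fintype.card (κ i)) / c i)) * L * ρ * μ Set.univ ^ p.toReal⁻¹ := by
  refine eLpNorm_le_of_ae_enorm_bound ?_
  filter_upwards [ae_existsUnique_mem hdisj hcover] with x ⟨i, hxi, hunique⟩
  rw [hJtilde x i hxi fun j hji hxj => hji (hunique j hxj)]
  calc ‖u i - J x‖ₑ ≤ ENNReal.ofReal (√(Fintype.card (κ i)) / c i * L * ρ) := by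
        rw [← ofReal_norm]
        exact ENNReal.ofReal_le_ofReal
          (norm_leastSquares_sub_le (hc i) (hlow i) (fun k => (hn i k).le) (hJ i)
            (hdiam i) (hσ i) (hu i) hxi)
    _ = ENNReal.ofReal (√(Fintype.card (κ i)) / c i) * L * ρ := by
        rw [ENNReal.ofReal_mul' ρ.coe_nonneg, ENNReal.ofReal_mul' L.coe_nonneg,
          ENNReal.ofReal_coe_nnreal, ENNReal.ofReal_coe_nnreal]
    _ ≤ (⨆ i, ENNReal.ofReal (√(Fintype.card (κ i)) / c i)) * L * ρ := by
        gcongr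
        exact le_iSup (fun i => ENNReal.ofReal (√(Fintype.card (κ i)) / c i)) i

theorem iSup_ofReal_div_mul_mul_le {ι : Type*} [Finite ι] {a c C : ι → ℝ} (ha : ∀ i, 0 ≤ a i)
    (hc : ∀ i, 0 < c i) (hcC : ∀ i, c i ≤ C i) (L : ℝ) {ρ : ℝ} (hρ : 0 ≤ ρ) :
    (⨆ i, ENNReal.ofReal (a i / c i)) * ENNReal.ofReal L * ENNReal.ofReal ρ ≤
      ENNReal.ofReal ((⨆ i, C i / c i ^ 2 * a i) * L * ρ) := by
  have hle (i) : a i / c i ≤ C i / c i ^ 2 * a i := by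
    calc a i / c i = c i / c i ^ 2 * a i := by field_simp [(hc i).ne']
      _ ≤ C i / c i ^ 2 * a i := by gcongr; exacts [ha i, hcC i]
  have hsup_nonneg : 0 ≤ ⨆ i, C i / c i ^ 2 * a i :=
    Real.iSup_nonneg fun i => (div_nonneg (ha i) (hc i).le).trans (hle i)
  rw [ENNReal.ofReal_mul' hρ, ENNReal.ofReal_mul hsup_nonneg]
  gcongr
  exact iSup_le fun i => ENNReal.ofReal_le_ofReal <|
    (hle i).trans (le_ciSup (f := fun i => C i / c i ^ 2 * a i) (Set.finite_range _).bddAbove i)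

/-- **Theorem 3.5 (L²(μ) error bound for the approximate probability current).**
Let `{S_i}_{i ∈ I}` be a finite family of measurable subsets of `S` with pairwise `μ`-null
intersections, covering `μ`-almost all of `S`, each of Euclidean diameter at most `ρ`.
Let `J` be `L`-Lipschitz; for each cell let `n_{i,1}, …, n_{i,m_i}` be unit vectors forming
the matrix `N_i` with singular values bounded between `c_i` and `C_i`, let `σ_{i,k}` be finite
facet measures concentrated on `S_i`, let `α̂_{i,k}` be the facet averages of the normal
components of `J`, let `J̃_i := (N_iᵀN_i)⁻¹N_iᵀα̂_i`, and let `J̃` be the piecewise-constant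
function equal to `J̃_i` on points lying in exactly one cell.  Then
`‖J̃ − J‖_{L²(μ;ℝ^d)} ≤ (sup_i (C_i/c_i²)√m_i) · L · ρ`. -/
theorem approximate_current_L2_error_bound
    (d : ℕ) {ι : Type} [Fintype ι] [Nonempty ι]
    (S : Set (EuclideanSpace ℝ (Fin d))) (hSmeas : MeasurableSet S)
    (μ : Measure (EuclideanSpace ℝ (Fin d))) [IsProbabilityMeasure μ] (hμS : μ S = 1)
    (cell : ι → Set (EuclideanSpace ℝ (Fin d)))
    (hcellS : ∀ i, cell i ⊆ S)
    (hcellmeas : ∀ i, MeasurableSet (cell i))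
    (hnull : ∀ i j, i ≠ j → μ (cell i ∩ cell j) = 0)
    (hcover : μ (⋃ i, cell i) = 1)
    (ρ : ℝ) (hρ : 0 < ρ)
    (hdiam : ∀ i, EMetric.diam (cell i) ≤ ENNReal.ofReal ρ)
    (J : EuclideanSpace ℝ (Fin d) → EuclideanSpace ℝ (Fin d))
    (L : ℝ) (hJ : ∀ x y, ‖J x - J y‖ ≤ L * ‖x - y‖)
    (m : ι → ℕ) (n : ∀ i, Fin (m i) → EuclideanSpace ℝ (Fin d))
    (hn : ∀ i k, ‖n i k‖ = 1)
    (N : ∀ i, Matrix (Fin (m i)) (Fin d) ℝ) (hN : ∀ i k j, N i k j = n i k j)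
    (c C : ι → ℝ) (hc : ∀ i, 0 < c i) (hcC : ∀ i, c i ≤ C i)
    (hlow : ∀ i, ∀ w : Fin d → ℝ,
      c i * ‖(EuclideanSpace.equiv (Fin d) ℝ).symm w‖ ≤
        ‖(EuclideanSpace.equiv (Fin (m i)) ℝ).symm ((N i).mulVec w)‖)
    (hup : ∀ i, ∀ w : Fin d → ℝ,
      ‖(EuclideanSpace.equiv (Fin (m i)) ℝ).symm ((N i).mulVec w)‖ ≤
        C i * ‖(EuclideanSpace.equiv (Fin d) ℝ).symm w‖)
    (σ : ∀ i, Fin (m i) → Measure (EuclideanSpace ℝ (Fin d)))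
    (hσ0 : ∀ i k, σ i k Set.univ ≠ 0) (hσfin : ∀ i k, σ i k Set.univ ≠ ⊤)
    (hσsupp : ∀ i k, σ i k (cell i)ᶜ = 0)
    (αhat : ∀ i, Fin (m i) → ℝ)
    (hαhat : ∀ i k, αhat i k =
      ((σ i k) Set.univ).toReal⁻¹ * ∫ y, (inner ℝ (n i k) (J y) : ℝ) ∂(σ i k))
    (Jt : ∀ i, Fin d → ℝ)
    (hJt : ∀ i, Jt i = (((N i)ᵀ * N i)⁻¹ * (N i)ᵀ).mulVec (αhat i))
    (Jtilde : EuclideanSpace ℝ (Fin d) → EuclideanSpace ℝ (Fin d))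
    (hJtilde : ∀ x, ∀ i, x ∈ cell i → (∀ j, j ≠ i → x ∉ cell j) →
      Jtilde x = (EuclideanSpace.equiv (Fin d) ℝ).symm (Jt i)) :
    eLpNorm (fun x => Jtilde x - J x) 2 μ ≤
      ENNReal.ofReal ((⨆ i, (C i / c i ^ 2) * Real.sqrt (m i)) * L * ρ) := by
  have hσne (i k) : NeZero (σ i k) := ⟨fun h => hσ0 i k (by simp [h])⟩
  have hσfinite (i k) : IsFiniteMeasure (σ i k) := ⟨(hσfin i k).lt_top⟩
  have hcover' : ∀ᵐ x ∂μ, ∃ i, x ∈ cell i :=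
    Filter.mem_of_superset ((mem_ae_iff_prob_eq_one (.iUnion hcellmeas)).mpr hcover)
      fun _ => Set.mem_iUnion.mp
  have hlip : LipschitzWith L.toNNReal J := .of_dist_le_mul fun x y => by
    simpa only [dist_eq_norm] using (hJ x y).trans (by gcongr; exact Real.le_coe_toNNReal L)
  have hlow' (i w) : c i * ‖w‖ ≤ ‖toEuclideanLin (N i) w‖ := hlow i w.ofLp
  have hsol (i) : IsLeastSquaresSolution (normalMap (n i)) (facetFlux (n i) J (σ i))
      (WithLp.toLp 2 (Jt i)) := by
    rw [← toEuclideanLin_eq_normalMap (hN i), facetFlux_eq_toLp (hαhat i), hJt,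
      ← conjTranspose_eq_transpose_of_trivial]
    exact isLeastSquaresSolution_toEuclideanLin
      (mulVec_injective_of_le_norm_toEuclideanLin (hc i) (hlow' i)) _
  have hbound := approximate_current_L2_error_bound_general 2 (fun i j => hnull i j) hcover' hdiam
    (fun _ => hlip.lipschitzOnWith) hn hc (fun i => toEuclideanLin_eq_normalMap (hN i) ▸ hlow' i)
    hσsupp hsol hJtilde
  simp only [measure_univ, ENNReal.one_rpow, mul_one, Fintype.card_fin] at hbound
  exact hbound.trans (iSup_ofReal_div_mul_mul_le (fun i => Real.sqrt_nonneg (m i)) hc hcC L hρ.le)
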